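/- Let X be a Banach space, T > 0, and let Λ : L²(0,T;X) → L²(0,T;X) be an operator for which there exists a constant L > 0 such that ‖(Λη₁)(t) − (Λη₂)(t)‖_X ≤ L ∫₀ᵗ ‖η₁(s) − η₂(s)‖_X ds for all η₁, η₂ ∈ L²(0,T;X) and a.e. t ∈ (0,T). Then Λ satisfies the squared estimate ‖(Λη₁)(t) − (Λη₂)(t)‖²_X ≤ L²T ∫₀ᵗ ‖η₁(s) − η₂(s)‖²_X ds for a.e. t ∈ (0,T), and consequently Λ has a unique fixed point η* ∈ L²(0,T;X) with Λη* = η*. -/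

import Mathlib

open MeasureTheory Set

/-- The measure on the time interval `(0,T]`, used to model the Bochner space `L²(0,T;X)`
as `Lp X 2 (timeMeasure T)`. -/
noncomputable def timeMeasure (T : ℝ) : Measure ℝ := volume.restrict (Ioc 0 T)

/-! Iterating the hypothesis integrates powers of `t`:
`‖(Λⁿ⁺¹ η₁)(t) - (Λⁿ⁺¹ η₂)(t)‖ ≤ Lⁿ⁺¹ tⁿ / n! * ∫₀ᵀ ‖η₁ - η₂‖`. On `(0, T]` the `L¹` norm is at most
`T ^ (1 - 1 / p)` times the `Lᵖ` norm, which is at most `T ^ (1 / p)` times the `L^∞` norm, so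
`Λⁿ⁺¹` is Lipschitz on `Lᵖ` with constant `(L T)ⁿ⁺¹ / n!`. This tends to `0`, and a map with a
contracting iterate has exactly one fixed point. The pointwise estimate of `p`-th powers is Jensen's
inequality on `(0, t]`. -/

open Filter Function
open scoped ENNReal NNReal Nat Topology

theorem existsUnique_isFixedPt_of_contractingWith_iterate {α : Type*} [MetricSpace α]
    [CompleteSpace α] [Nonempty α] {f : α → α} {K : ℝ≥0} {n : ℕ} (hf : ContractingWith K f^[n]) :
    ∃! x, IsFixedPt f x :=
  ⟨_, hf.isFixedPt_fixedPoint_iterate, fun _ hy => hf.fixedPoint_unique (hy.iterate n)⟩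

theorem rpow_integral_le_measureReal_univ_rpow_mul_integral_rpow {α : Type*}
    {m : MeasurableSpace α} {μ : Measure α} [IsFiniteMeasure μ] {f : α → ℝ} {q : ℝ} (hq : 1 ≤ q)
    (hf₀ : 0 ≤ᵐ[μ] f) (hf : Integrable f μ) (hfq : Integrable (fun x => f x ^ q) μ) :
    (∫ x, f x ∂μ) ^ q ≤ μ.real univ ^ (q - 1) * ∫ x, f x ^ q ∂μ := by
  rcases eq_zero_or_neZero μ with rfl | _
  · simp [Real.zero_rpow (by linarith : q ≠ 0)]
  have hμ : 0 < μ.real univ := measureReal_univ_pos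
  have hjensen : ((μ.real univ)⁻¹ * ∫ x, f x ∂μ) ^ q ≤ (μ.real univ)⁻¹ * ∫ x, f x ^ q ∂μ := by
    simpa only [average_eq, smul_eq_mul] using
      (convexOn_rpow hq).map_average_le (Real.continuous_rpow_const (by linarith)).continuousOn
        isClosed_Ici hf₀ hf hfq
  rw [Real.mul_rpow (by positivity) (integral_nonneg_of_ae hf₀), Real.inv_rpow hμ.le,
    inv_mul_le_iff₀ (by positivity)] at hjensen
  rwa [Real.rpow_sub_one hμ.ne', div_mul_eq_mul_div, ← inv_mul_eq_div, ← mul_left_comm]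

theorem inv_toReal_le_one_of_one_le {p : ℝ≥0∞} (hp : 1 ≤ p) : p.toReal⁻¹ ≤ 1 := by
  simpa using ENNReal.toReal_mono ENNReal.one_ne_top (ENNReal.inv_le_one.2 hp)

section FiniteMeasure

variable {α E : Type*} {m : MeasurableSpace α} {μ : Measure α} [IsFiniteMeasure μ]
  [NormedAddCommGroup E] {p : ℝ≥0∞}

theorem integral_norm_le_measureReal_univ_rpow_mul_norm (hp : 1 ≤ p) (f : Lp E p μ) :
    ∫ x, ‖f x‖ ∂μ ≤ μ.real univ ^ (1 - p.toReal⁻¹) * ‖f‖ := by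
  have hle : eLpNorm f 1 μ ≤ μ univ ^ (1 - p.toReal⁻¹) * eLpNorm f p μ := by
    simpa [mul_comm] using
      eLpNorm_le_eLpNorm_mul_rpow_measure_univ hp (Lp.aestronglyMeasurable f)
  have htop : μ univ ^ (1 - p.toReal⁻¹) * eLpNorm f p μ ≠ ∞ :=
    ENNReal.mul_ne_top (ENNReal.rpow_ne_top_of_nonneg
      (sub_nonneg.2 (inv_toReal_le_one_of_one_le hp)) (measure_ne_top μ univ)) (Lp.eLpNorm_ne_top f)
  calc ∫ x, ‖f x‖ ∂μ = (eLpNorm f 1 μ).toReal := by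
        rw [integral_norm_eq_lintegral_enorm (Lp.aestronglyMeasurable f),
          eLpNorm_one_eq_lintegral_enorm]
    _ ≤ (μ univ ^ (1 - p.toReal⁻¹) * eLpNorm f p μ).toReal := ENNReal.toReal_mono htop hle
    _ = μ.real univ ^ (1 - p.toReal⁻¹) * ‖f‖ := by
        rw [ENNReal.toReal_mul, ← ENNReal.toReal_rpow, Lp.norm_def, measureReal_def]

theorem norm_le_mul_measureReal_univ_mul_norm_of_ae_le (hp : 1 ≤ p) {f g : Lp E p μ} {C : ℝ}
    (hC : 0 ≤ C) (h : ∀ᵐ x ∂μ, ‖g x‖ ≤ C * ∫ y, ‖f y‖ ∂μ) :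
    ‖g‖ ≤ C * μ.real univ * ‖f‖ := by
  have hexp : μ.real univ ^ p.toReal⁻¹ * μ.real univ ^ (1 - p.toReal⁻¹) = μ.real univ := by
    rw [← Real.rpow_add_of_nonneg measureReal_nonneg (by positivity)
      (sub_nonneg.2 (inv_toReal_le_one_of_one_le hp)), add_sub_cancel, Real.rpow_one]
  calc ‖g‖ ≤ μ.real univ ^ p.toReal⁻¹ * (C * ∫ y, ‖f y‖ ∂μ) :=
        Lp.norm_le_of_ae_bound (by positivity) h
    _ ≤ μ.real univ ^ p.toReal⁻¹ * (C * (μ.real univ ^ (1 - p.toReal⁻¹) * ‖f‖)) := by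
        gcongr
        exact integral_norm_le_measureReal_univ_rpow_mul_norm hp f
    _ = C * (μ.real univ ^ p.toReal⁻¹ * μ.real univ ^ (1 - p.toReal⁻¹)) * ‖f‖ := by ring
    _ = C * μ.real univ * ‖f‖ := by rw [hexp]

end FiniteMeasure

theorem setIntegral_Ioc_pow_div_factorial {t : ℝ} (ht : 0 ≤ t) (n : ℕ) :
    ∫ s in Ioc 0 t, s ^ n / n ! = t ^ (n + 1) / (n + 1)! := by
  rw [← intervalIntegral.integral_of_le ht, intervalIntegral.integral_div, integral_pow,
    Nat.factorial_succ]
  push_cast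
  simp [div_div]

instance isFiniteMeasure_timeMeasure (T : ℝ) : IsFiniteMeasure (timeMeasure T) := by
  unfold timeMeasure; infer_instance

theorem timeMeasure_real_univ {T : ℝ} (hT : 0 ≤ T) : (timeMeasure T).real univ = T := by
  simp [timeMeasure, hT]

theorem timeMeasure_mono {t T : ℝ} (h : t ≤ T) : timeMeasure t ≤ timeMeasure T :=
  Measure.restrict_mono (Ioc_subset_Ioc_right h) le_rfl

theorem ae_timeMeasure_mem_Ioc (T : ℝ) : ∀ᵐ t ∂timeMeasure T, t ∈ Ioc 0 T :=
  ae_restrict_mem measurableSet_Ioc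

theorem ae_le_pow_div_factorial_mul_integral_of_ae_le {T L : ℝ} (hL : 0 ≤ L) {u : ℕ → ℝ → ℝ}
    (hu₀ : 0 ≤ᵐ[timeMeasure T] u 0) (hu : ∀ n, Integrable (u n) (timeMeasure T))
    (h : ∀ n, ∀ᵐ t ∂timeMeasure T, u (n + 1) t ≤ L * ∫ s in Ioc 0 t, u n s) (n : ℕ) :
    ∀ᵐ t ∂timeMeasure T, u (n + 1) t ≤ L ^ (n + 1) * (t ^ n / n !) * ∫ s, u 0 s ∂timeMeasure T := by
  induction n with
  | zero =>
    filter_upwards [h 0, ae_timeMeasure_mem_Ioc T] with t hut ht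
    calc u 1 t ≤ L * ∫ s in Ioc 0 t, u 0 s := hut
      _ ≤ L * ∫ s, u 0 s ∂timeMeasure T :=
        mul_le_mul_of_nonneg_left (integral_mono_measure (timeMeasure_mono ht.2) hu₀ (hu 0)) hL
      _ = L ^ (0 + 1) * (t ^ 0 / 0 !) * ∫ s, u 0 s ∂timeMeasure T := by simp
  | succ n ih =>
    filter_upwards [h (n + 1), ae_timeMeasure_mem_Ioc T] with t hut ht
    set I := ∫ s, u 0 s ∂timeMeasure T
    have hint : ∫ s in Ioc 0 t, u (n + 1) s ≤
        ∫ s in Ioc 0 t, L ^ (n + 1) * (s ^ n / n !) * I :=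
      integral_mono_ae ((hu (n + 1)).mono_measure (timeMeasure_mono ht.2))
        (Continuous.integrableOn_Ioc (by fun_prop)) (ae_mono (timeMeasure_mono ht.2) ih)
    calc u (n + 2) t ≤ L * ∫ s in Ioc 0 t, u (n + 1) s := hut
      _ ≤ L * ∫ s in Ioc 0 t, L ^ (n + 1) * (s ^ n / n !) * I := by gcongr
      _ = L ^ (n + 2) * (t ^ (n + 1) / (n + 1)!) * I := by
        rw [integral_mul_const, integral_const_mul, setIntegral_Ioc_pow_div_factorial ht.1.le]
        ring

/-- History-dependent operators on the Bochner space `Lᵖ(0, T; X)`: the values at almost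
every time `t` are Lipschitz with constant `L` in the `L¹` distance of the histories on `(0, t]`.
Since the exceptional null set may depend on `η₁` and `η₂`, the choice of representatives is
immaterial. -/
def IsHistoryDependent {X : Type*} [NormedAddCommGroup X] {p : ℝ≥0∞} {T : ℝ} (L : ℝ)
    (Λ : Lp X p (timeMeasure T) → Lp X p (timeMeasure T)) : Prop :=
  ∀ η₁ η₂ : Lp X p (timeMeasure T), ∀ᵐ t ∂timeMeasure T,
    ‖Λ η₁ t - Λ η₂ t‖ ≤ L * ∫ s in Ioc (0 : ℝ) t, ‖η₁ s - η₂ s‖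

namespace IsHistoryDependent

variable {X : Type*} [NormedAddCommGroup X] {p : ℝ≥0∞} [Fact (1 ≤ p)] {T L : ℝ}
  {Λ : Lp X p (timeMeasure T) → Lp X p (timeMeasure T)}

theorem norm_sub_rpow_ae_le (hΛ : IsHistoryDependent L Λ) (hp : p ≠ ∞) (hL : 0 ≤ L)
    (η₁ η₂ : Lp X p (timeMeasure T)) : ∀ᵐ t ∂timeMeasure T,
      ‖Λ η₁ t - Λ η₂ t‖ ^ p.toReal ≤
        L ^ p.toReal * T ^ (p.toReal - 1) * ∫ s in Ioc (0 : ℝ) t, ‖η₁ s - η₂ s‖ ^ p.toReal := by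
  have hp₁ : 1 ≤ p.toReal := by
    simpa using ENNReal.toReal_mono hp (Fact.out : 1 ≤ p)
  have hη : MemLp (fun s => η₁ s - η₂ s) p (timeMeasure T) := (Lp.memLp η₁).sub (Lp.memLp η₂)
  filter_upwards [hΛ η₁ η₂, ae_timeMeasure_mem_Ioc T] with t hΛt ht
  have hηt := hη.mono_measure (timeMeasure_mono ht.2)
  have hjensen := rpow_integral_le_measureReal_univ_rpow_mul_integral_rpow hp₁
    (ae_of_all _ fun s => norm_nonneg (η₁ s - η₂ s)) (hηt.integrable Fact.out).norm
    hηt.integrable_norm_rpow'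
  rw [timeMeasure_real_univ ht.1.le] at hjensen
  have hT : t ^ (p.toReal - 1) ≤ T ^ (p.toReal - 1) :=
    Real.rpow_le_rpow ht.1.le ht.2 (by linarith)
  calc ‖Λ η₁ t - Λ η₂ t‖ ^ p.toReal
      ≤ (L * ∫ s in Ioc 0 t, ‖η₁ s - η₂ s‖) ^ p.toReal := by gcongr
    _ = L ^ p.toReal * (∫ s in Ioc 0 t, ‖η₁ s - η₂ s‖) ^ p.toReal :=
      Real.mul_rpow hL (by positivity)
    _ ≤ L ^ p.toReal * (t ^ (p.toReal - 1) * ∫ s in Ioc 0 t, ‖η₁ s - η₂ s‖ ^ p.toReal) := by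
      gcongr; exact hjensen
    _ ≤ L ^ p.toReal * (T ^ (p.toReal - 1) * ∫ s in Ioc 0 t, ‖η₁ s - η₂ s‖ ^ p.toReal) := by
      gcongr
    _ = L ^ p.toReal * T ^ (p.toReal - 1) * ∫ s in Ioc 0 t, ‖η₁ s - η₂ s‖ ^ p.toReal := by
      ring

theorem norm_iterate_sub_ae_le (hΛ : IsHistoryDependent L Λ) (hL : 0 ≤ L)
    (η₁ η₂ : Lp X p (timeMeasure T)) (n : ℕ) : ∀ᵐ t ∂timeMeasure T,
      ‖(Λ^[n + 1] η₁ - Λ^[n + 1] η₂) t‖ ≤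
        L ^ (n + 1) * (t ^ n / n !) * ∫ s, ‖(η₁ - η₂) s‖ ∂timeMeasure T := by
  have hu (k : ℕ) : Integrable (fun s => ‖Λ^[k] η₁ s - Λ^[k] η₂ s‖) (timeMeasure T) :=
    (((Lp.memLp _).sub (Lp.memLp _)).integrable Fact.out).norm
  have hsub : ∫ s, ‖(η₁ - η₂) s‖ ∂timeMeasure T = ∫ s, ‖η₁ s - η₂ s‖ ∂timeMeasure T :=
    integral_congr_ae ((Lp.coeFn_sub η₁ η₂).fun_comp norm)
  have hbound := ae_le_pow_div_factorial_mul_integral_of_ae_le hL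
    (ae_of_all _ fun _ => norm_nonneg _) hu
    (fun k => by simpa only [iterate_succ_apply'] using hΛ (Λ^[k] η₁) (Λ^[k] η₂)) n
  filter_upwards [hbound, Lp.coeFn_sub (Λ^[n + 1] η₁) (Λ^[n + 1] η₂)] with t ht hsubt
  rwa [hsubt, Pi.sub_apply, hsub]

theorem dist_iterate_le (hΛ : IsHistoryDependent L Λ) (hL : 0 ≤ L) (hT : 0 ≤ T)
    (η₁ η₂ : Lp X p (timeMeasure T)) (n : ℕ) :
    dist (Λ^[n + 1] η₁) (Λ^[n + 1] η₂) ≤ L * T * ((L * T) ^ n / n !) * dist η₁ η₂ := by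
  have hbound : ∀ᵐ t ∂timeMeasure T, ‖(Λ^[n + 1] η₁ - Λ^[n + 1] η₂) t‖ ≤
      L ^ (n + 1) * (T ^ n / n !) * ∫ s, ‖(η₁ - η₂) s‖ ∂timeMeasure T := by
    filter_upwards [hΛ.norm_iterate_sub_ae_le hL η₁ η₂ n, ae_timeMeasure_mem_Ioc T] with t hΛt ht
    have ht₀ := ht.1.le
    exact hΛt.trans (by gcongr; exact ht.2)
  rw [dist_eq_norm, dist_eq_norm]
  calc ‖Λ^[n + 1] η₁ - Λ^[n + 1] η₂‖
      ≤ L ^ (n + 1) * (T ^ n / n !) * (timeMeasure T).real univ * ‖η₁ - η₂‖ :=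
        norm_le_mul_measureReal_univ_mul_norm_of_ae_le Fact.out (by positivity) hbound
    _ = L * T * ((L * T) ^ n / n !) * ‖η₁ - η₂‖ := by rw [timeMeasure_real_univ hT]; ring

theorem exists_contractingWith_iterate (hΛ : IsHistoryDependent L Λ) (hL : 0 ≤ L) (hT : 0 ≤ T) :
    ∃ n, ContractingWith (1 / 2) Λ^[n] := by
  have hlim : Tendsto (fun n : ℕ => L * T * ((L * T) ^ n / n !)) atTop (𝓝 0) := by
    simpa using (FloorSemiring.tendsto_pow_div_factorial_atTop (L * T)).const_mul (L * T)
  obtain ⟨n, hn⟩ := (hlim.eventually_le_const (show (0 : ℝ) < 1 / 2 by norm_num)).exists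
  refine ⟨n + 1, by norm_num [← NNReal.coe_lt_coe], LipschitzWith.of_dist_le_mul fun η₁ η₂ => ?_⟩
  calc dist (Λ^[n + 1] η₁) (Λ^[n + 1] η₂) ≤ L * T * ((L * T) ^ n / n !) * dist η₁ η₂ :=
        hΛ.dist_iterate_le hL hT η₁ η₂ n
    _ ≤ (1 / 2 : ℝ) * dist η₁ η₂ := by gcongr
    _ = ((1 / 2 : ℝ≥0) : ℝ) * dist η₁ η₂ := by norm_num

theorem existsUnique_isFixedPt [CompleteSpace X] (hΛ : IsHistoryDependent L Λ) (hL : 0 ≤ L)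
    (hT : 0 ≤ T) : ∃! η, IsFixedPt Λ η :=
  let ⟨_, hn⟩ := hΛ.exists_contractingWith_iterate hL hT
  existsUnique_isFixedPt_of_contractingWith_iterate hn

end IsHistoryDependent

theorem history_dependent_fixed_point_general {X : Type*} [NormedAddCommGroup X]
    [CompleteSpace X] {p : ℝ≥0∞} [Fact (1 ≤ p)] {T L : ℝ} (hT : 0 ≤ T) (hL : 0 ≤ L)
    {Λ : Lp X p (timeMeasure T) → Lp X p (timeMeasure T)} (hΛ : IsHistoryDependent L Λ) :
    (p ≠ ∞ → ∀ η₁ η₂ : Lp X p (timeMeasure T), ∀ᵐ t ∂timeMeasure T,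
      ‖Λ η₁ t - Λ η₂ t‖ ^ p.toReal ≤
        L ^ p.toReal * T ^ (p.toReal - 1) * ∫ s in Ioc (0 : ℝ) t, ‖η₁ s - η₂ s‖ ^ p.toReal) ∧
    ∃! η : Lp X p (timeMeasure T), Λ η = η :=
  ⟨fun hp => hΛ.norm_sub_rpow_ae_le hp hL, hΛ.existsUnique_isFixedPt hL hT⟩

/-- A history-dependent operator `Λ : L²(0,T;X) → L²(0,T;X)` (with constant
`L > 0`) satisfies the squared estimate
`‖(Λη₁)(t) − (Λη₂)(t)‖² ≤ L²T ∫₀ᵗ ‖η₁(s) − η₂(s)‖² ds` for a.e. `t ∈ (0,T)`,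
and consequently has a unique fixed point in `L²(0,T;X)`. -/
theorem history_dependent_fixed_point {X : Type*} [NormedAddCommGroup X] [NormedSpace ℝ X]
    [CompleteSpace X] {T : ℝ} (hT : 0 < T) {L : ℝ} (hL : 0 < L)
    (Λ : Lp X 2 (timeMeasure T) → Lp X 2 (timeMeasure T))
    (hΛ : ∀ η₁ η₂ : Lp X 2 (timeMeasure T), ∀ᵐ t ∂(timeMeasure T),
      ‖Λ η₁ t - Λ η₂ t‖ ≤ L * ∫ s in Ioc (0:ℝ) t, ‖η₁ s - η₂ s‖) :
    (∀ η₁ η₂ : Lp X 2 (timeMeasure T), ∀ᵐ t ∂(timeMeasure T),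
      ‖Λ η₁ t - Λ η₂ t‖ ^ 2 ≤ L ^ 2 * T * ∫ s in Ioc (0:ℝ) t, ‖η₁ s - η₂ s‖ ^ 2) ∧
    ∃! η : Lp X 2 (timeMeasure T), Λ η = η := by
  simpa [-Subtype.forall, show (2 : ℝ) - 1 = 1 by norm_num] using
    history_dependent_fixed_point_general hT.le hL.le hΛ
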